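/- Fix an integer d ≥ 1, m > 0 and x ∈ ℝ^d. Then the probability measures V'_{x,a} on Ω(x) converge weakly, as a → 0⁺, to (m²/2)·V'_x. (This is the strong form of Theorem 3.2, proven on the space of parametrized paths.) -/

import Mathlib

open MeasureTheory Filter Topology Real Set
open scoped RealInnerProductSpace ENNReal unitInterval

noncomputable section

/-- `ℝ^d` as a Euclidean space. -/
abbrev Ed (d : ℕ) := EuclideanSpace ℝ (Fin d)

/-- The space of continuous paths `[0,1] → ℝ^d`, with the uniform metric. -/
abbrev PathSp (d : ℕ) := C(unitInterval, Ed d)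

instance (d : ℕ) : MeasurableSpace (PathSp d) := borel _
instance (d : ℕ) : BorelSpace (PathSp d) := ⟨rfl⟩

/-- Evaluation of a path at a real time, clamped to `[0,1]`. -/
def evalAt {d : ℕ} (ω : PathSp d) (t : ℝ) : Ed d := ω (Set.projIcc 0 1 zero_le_one t)

/-- `Ω(x)`: continuous paths starting at `x`. -/
abbrev Omega1 {d : ℕ} (x : Ed d) := {ω : PathSp d // ω 0 = x}

/-- `Ω(x,y)`: continuous paths from `x` to `y`. -/
abbrev Omega2 {d : ℕ} (x y : Ed d) := {ω : PathSp d // ω 0 = x ∧ ω 1 = y}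

/-- clamp a real number to `[0,1]`. -/
def clamp01 (r : ℝ) : ℝ := min 1 (max 0 r)

lemma clamp01_of_nonpos {r : ℝ} (h : r ≤ 0) : clamp01 r = 0 := by
  rw [clamp01, max_eq_left h, min_eq_right zero_le_one]

lemma clamp01_of_one_le {r : ℝ} (h : 1 ≤ r) : clamp01 r = 1 := by
  rw [clamp01, max_eq_right (zero_le_one.trans h), min_eq_left h]

lemma clamp01_continuous : Continuous clamp01 :=
  continuous_const.min (continuous_const.max continuous_id)

/-- The piecewise linear path starting at `x` with `N` steps given by the increments `v i`,
the `i`-th step being linearly parametrized by `[i/N, (i+1)/N]`. -/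
def pwLinE {d : ℕ} (x : Ed d) (N : ℕ) (v : Fin N → Ed d) : PathSp d :=
  ⟨fun t => x + ∑ i : Fin N, clamp01 ((N : ℝ) * (t : ℝ) - ((i : ℕ) : ℝ)) • v i, by
    refine continuous_const.add (continuous_finset_sum _ fun i _ => ?_)
    exact ((clamp01_continuous.comp
      ((continuous_const.mul continuous_subtype_val).sub continuous_const)).smul
      continuous_const)⟩

lemma pwLinE_zero {d : ℕ} (x : Ed d) (N : ℕ) (v : Fin N → Ed d) :
    pwLinE x N v 0 = x := by
  show x + ∑ i : Fin N, clamp01 ((N : ℝ) * ((0 : unitInterval) : ℝ) - ((i : ℕ) : ℝ)) • v i = x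
  have h : ∀ i : Fin N, clamp01 ((N : ℝ) * ((0 : unitInterval) : ℝ) - ((i : ℕ) : ℝ)) = 0 := by
    intro i
    apply clamp01_of_nonpos
    have h0 : ((0 : unitInterval) : ℝ) = 0 := rfl
    rw [h0, mul_zero, zero_sub]
    exact neg_nonpos.mpr (Nat.cast_nonneg (i : ℕ))
  simp only [h, zero_smul, Finset.sum_const_zero, add_zero]

lemma pwLinE_one {d : ℕ} (x : Ed d) (N : ℕ) (v : Fin N → Ed d) :
    pwLinE x N v 1 = x + ∑ i : Fin N, v i := by
  show x + ∑ i : Fin N, clamp01 ((N : ℝ) * ((1 : unitInterval) : ℝ) - ((i : ℕ) : ℝ)) • v i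
      = x + ∑ i : Fin N, v i
  have h : ∀ i : Fin N, clamp01 ((N : ℝ) * ((1 : unitInterval) : ℝ) - ((i : ℕ) : ℝ)) = 1 := by
    intro i
    apply clamp01_of_one_le
    have h1 : ((1 : unitInterval) : ℝ) = 1 := rfl
    have h2 : ((i : ℕ) : ℝ) + 1 ≤ (N : ℝ) := by
      exact_mod_cast Nat.succ_le_of_lt i.isLt
    rw [h1, mul_one]; linarith
  simp only [h, one_smul]

/-- Piecewise linear element of `Ω(x)` with increments `v`. -/
def pwLin1 {d : ℕ} (x : Ed d) (N : ℕ) (v : Fin N → Ed d) : Omega1 x :=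
  ⟨pwLinE x N v, pwLinE_zero x N v⟩

/-- Piecewise linear element of `Ω(x,y)` with increments `v` summing to `y - x`. -/
def pwLin2 {d : ℕ} (x y : Ed d) (N : ℕ) (v : Fin N → Ed d)
    (h : x + ∑ i : Fin N, v i = y) : Omega2 x y :=
  ⟨pwLinE x N v, pwLinE_zero x N v, by rw [pwLinE_one, h]⟩

/-- the point preceding `x_i` in the list `x, x_1, …, x_N`. -/
def prevPt {d : ℕ} (x : Ed d) {N : ℕ} (xs : Fin N → Ed d) (i : Fin N) : Ed d :=
  if (i : ℕ) = 0 then x else xs ⟨(i : ℕ) - 1, lt_of_le_of_lt (Nat.pred_le _) i.isLt⟩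

/-- The discrete measure `W_{x,a,N}`, i.e. the measure
`∏_{i=1}^N (2πa²)^{-d/2} exp(-|x_i - x_{i-1}|²/(2a²)) dx_1 … dx_N` (with `x_0 = x`)
on `N`-step piecewise linear paths, placed on `{a²N} × Ω(x) ⊆ ℝ × Ω(x)`.
For `N = 0` this is the Dirac measure at `(0, constant path at x)`. -/
def WxaN {d : ℕ} (x : Ed d) (a : ℝ) (N : ℕ) : Measure (ℝ × Omega1 x) :=
  Measure.map
    (fun xs : Fin N → Ed d =>
      ((a ^ 2 * N : ℝ), pwLin1 x N fun i => xs i - prevPt x xs i))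
    (volume.withDensity fun xs : Fin N → Ed d =>
      ENNReal.ofReal (∏ i : Fin N,
        (2 * π * a ^ 2) ^ (-(d : ℝ) / 2) *
          Real.exp (-‖xs i - prevPt x xs i‖ ^ 2 / (2 * a ^ 2))))

/-- The approximating probability measure
`W_{x,a} = (1 - e^{-m²a²/2}) Σ_{N=0}^∞ e^{-m²a²N/2} W_{x,a,N}`. -/
def Wxa {d : ℕ} (x : Ed d) (m a : ℝ) : Measure (ℝ × Omega1 x) :=
  ENNReal.ofReal (1 - Real.exp (-m ^ 2 * a ^ 2 / 2)) •
    Measure.sum fun N : ℕ =>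
      ENNReal.ofReal (Real.exp (-m ^ 2 * a ^ 2 * N / 2)) • WxaN x a N

/-- The lattice step of length `a` in direction `p.1`, forwards or backwards
according to `p.2`. -/
def stepVec {d : ℕ} (a : ℝ) (p : Fin d × Bool) : Ed d :=
  (if p.2 then a else -a) • EuclideanSpace.single p.1 (1 : ℝ)

/-- The normalized counting measure `V'_{x,a,N}` giving mass `(2d)^{-N}` to each
(piecewise linearly parametrized) `N`-step nearest-neighbour lattice path in `x + aℤ^d`
starting at `x`.  For `N = 0` it is the Dirac measure at the constant path. -/
def VxaN {d : ℕ} (x : Ed d) (a : ℝ) (N : ℕ) : Measure (Omega1 x) :=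
  Measure.sum fun s : Fin N → Fin d × Bool =>
    (((2 * d : ℕ) : ℝ≥0∞) ^ N)⁻¹ •
      Measure.dirac (pwLin1 x N fun i => stepVec a (s i))

/-- The approximating probability measure
`V'_{x,a} = (1 - e^{-m²a²/(2d)}) Σ_{N=0}^∞ e^{-m²a²N/(2d)} V'_{x,a,N}`. -/
def Vxa {d : ℕ} (x : Ed d) (m a : ℝ) : Measure (Omega1 x) :=
  ENNReal.ofReal (1 - Real.exp (-m ^ 2 * a ^ 2 / (2 * d))) •
    Measure.sum fun N : ℕ =>
      ENNReal.ofReal (Real.exp (-m ^ 2 * a ^ 2 * N / (2 * d))) • VxaN x a N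

/-- `Wt` is the family of Wiener measures `(W_x^t)_{t>0}` on `Ω(x)`:
each `W_x^t` is a Borel probability measure, characterized by the characteristic
functions of its finite dimensional distributions
`∫ exp(i Σ_j ξ_j·ω(t_j)) dW_x^t = exp(-(t/2) Σ_j (t_j - t_{j-1}) |ξ_j + ⋯ + ξ_n|²
+ i x·(ξ_1 + ⋯ + ξ_n))` for all `0 = t_0 < t_1 < ⋯ < t_n ≤ 1`. -/
def IsWienerFamily {d : ℕ} (x : Ed d) (Wt : ℝ → Measure (Omega1 x)) : Prop :=
  ∀ t : ℝ, 0 < t → (IsProbabilityMeasure (Wt t) ∧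
    ∀ (n : ℕ) (ts : ℕ → ℝ), ts 0 = 0 → (∀ i < n, ts i < ts (i + 1)) → ts n ≤ 1 →
      ∀ ξ : Fin n → Ed d,
        (∫ ω : Omega1 x, Complex.exp (Complex.I *
            ((∑ i : Fin n, ⟪ξ i, evalAt ω.1 (ts ((i : ℕ) + 1))⟫ : ℝ) : ℂ)) ∂(Wt t))
          = Complex.exp
              (((-(t / 2) * ∑ i : Fin n,
                  (ts ((i : ℕ) + 1) - ts (i : ℕ)) * ‖∑ j ∈ Finset.Ici i, ξ j‖ ^ 2 : ℝ) : ℂ)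
                + Complex.I * ((⟪∑ j, ξ j, x⟫ : ℝ) : ℂ)))


lemma clamp01_nonneg (r : ℝ) : 0 ≤ clamp01 r := by simp [clamp01]

lemma clamp01_le_one (r : ℝ) : clamp01 r ≤ 1 := by simp [clamp01]

lemma clamp01_mono : Monotone clamp01 := fun r s h => by
  unfold clamp01
  gcongr

lemma clamp01_of_mem {r : ℝ} (h0 : 0 ≤ r) (h1 : r ≤ 1) : clamp01 r = r := by
  rw [clamp01, max_eq_right h0, min_eq_right h1]

lemma clamp01_sub_natCast (u : ℝ) (i : ℕ) :
    clamp01 (u - i) = min u ((i + 1 : ℕ) : ℝ) - min u (i : ℝ) := by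
  push_cast
  rcases le_total u i with h | h
  · rw [clamp01_of_nonpos (by linarith), min_eq_left h, min_eq_left (by linarith), sub_self]
  rcases le_total u (i + 1) with h' | h'
  · rw [clamp01_of_mem (by linarith) (by linarith), min_eq_left h', min_eq_right h]
  · rw [clamp01_of_one_le (by linarith), min_eq_right h, min_eq_right h']
    ring

lemma sum_clamp01 {N : ℕ} {u : ℝ} (hu : 0 ≤ u) (hN : u ≤ N) :
    ∑ i : Fin N, clamp01 (u - ((i : ℕ) : ℝ)) = u := by
  simp_rw [clamp01_sub_natCast u]
  rw [Finset.sum_range (fun i : ℕ => min u ((i + 1 : ℕ) : ℝ) - min u (i : ℝ)) |>.symm,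
    Finset.sum_range_sub (fun i : ℕ => min u (i : ℝ))]
  simp [hN, hu]

/-- A sum whose `i`-th term is nonzero only if `i < u < i + 1` has at most one nonzero term. -/
lemma norm_sum_range_le_of_unit_support {E : Type*} [SeminormedAddCommGroup E] (N : ℕ) (u : ℝ)
    (F : ℕ → E) {B : ℝ} (hB : 0 ≤ B) (h0 : ∀ i : ℕ, u ≤ i → F i = 0)
    (h1 : ∀ i : ℕ, (i : ℝ) + 1 ≤ u → F i = 0) (hF : ∀ i < N, ‖F i‖ ≤ B) :
    ‖∑ i ∈ Finset.range N, F i‖ ≤ B := by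
  by_cases h : ∃ i < N, F i ≠ 0
  · obtain ⟨i, hi, hne⟩ := h
    have key : ∀ j, F j ≠ 0 → (j : ℝ) < u ∧ u < j + 1 := fun j hj =>
      ⟨not_le.1 fun h => hj (h0 j h), not_le.1 fun h => hj (h1 j h)⟩
    rw [Finset.sum_eq_single i]
    · exact hF i hi
    · intro j _ hji
      by_contra hj
      obtain ⟨a1, a2⟩ := key i hne
      obtain ⟨b1, b2⟩ := key j hj
      have c1 : (i : ℝ) < ((j + 1 : ℕ) : ℝ) := by push_cast; linarith
      have c2 : (j : ℝ) < ((i + 1 : ℕ) : ℝ) := by push_cast; linarith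
      rw [Nat.cast_lt] at c1 c2
      omega
    · intro hi'
      exact absurd (Finset.mem_range.2 hi) hi'
  · push Not at h
    rw [Finset.sum_eq_zero fun i hi => h i (Finset.mem_range.1 hi)]
    simpa using hB

lemma evalAt_zero {d : ℕ} (ω : PathSp d) : evalAt ω 0 = ω 0 := by
  simp [evalAt]

lemma evalAt_coe {d : ℕ} (ω : PathSp d) (t : unitInterval) : evalAt ω t = ω t := by
  simp [evalAt]

/-- The piecewise linear interpolation of `ω` at the multiples of `1/N`. -/
def gridPath {d : ℕ} (N : ℕ) (ω : PathSp d) : PathSp d :=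
  pwLinE (ω 0) N fun i => evalAt ω ((((i : ℕ) : ℝ) + 1) / N) - evalAt ω (((i : ℕ) : ℝ) / N)

lemma gridPath_apply {d : ℕ} (N : ℕ) (ω : PathSp d) (t : unitInterval) :
    gridPath N ω t = ω 0 + ∑ i ∈ Finset.range N, clamp01 ((N : ℝ) * t - i) •
      (evalAt ω (((i : ℝ) + 1) / N) - evalAt ω ((i : ℝ) / N)) := by
  rw [Finset.sum_range]
  rfl

lemma sum_range_two_mul_eq {E : Type*} [AddCommMonoid E] (N : ℕ) (F : ℕ → E) :
    ∑ i ∈ Finset.range (2 * N), F i = ∑ i ∈ Finset.range N, (F (2 * i) + F (2 * i + 1)) := by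
  induction N with
  | zero => simp
  | succ n ih =>
    rw [Finset.sum_range_succ, ← ih, mul_add, mul_one, Finset.sum_range_succ,
      Finset.sum_range_succ, add_assoc]

lemma clamp01_two_mul_add (u : ℝ) : clamp01 (2 * u) + clamp01 (2 * u - 1) = 2 * clamp01 u := by
  unfold clamp01
  grind

/-- The second difference of `ω` over the `i`-th grid interval of mesh `1/N`. -/
def secondDiff {d : ℕ} (N : ℕ) (ω : PathSp d) (i : ℕ) : Ed d :=
  (2 : ℝ) • evalAt ω ((2 * (i : ℝ) + 1) / (2 * N)) - evalAt ω ((i : ℝ) / N)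
    - evalAt ω (((i : ℝ) + 1) / N)

lemma dist_gridPath_two_mul_le {d : ℕ} (N : ℕ) (ω : PathSp d) {B : ℝ} (hB : 0 ≤ B)
    (h : ∀ i < N, ‖secondDiff N ω i‖ ≤ B) :
    dist (gridPath (2 * N) ω) (gridPath N ω) ≤ B := by
  rw [ContinuousMap.dist_le hB]
  intro t
  rw [dist_eq_norm, gridPath_apply, gridPath_apply, add_sub_add_left_eq_sub,
    sum_range_two_mul_eq, ← Finset.sum_sub_distrib]
  have key : ∀ i : ℕ,
      (clamp01 (((2 * N : ℕ) : ℝ) * t - ((2 * i : ℕ) : ℝ)) •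
        (evalAt ω ((((2 * i : ℕ) : ℝ) + 1) / ((2 * N : ℕ) : ℝ))
          - evalAt ω (((2 * i : ℕ) : ℝ) / ((2 * N : ℕ) : ℝ))) +
      clamp01 (((2 * N : ℕ) : ℝ) * t - ((2 * i + 1 : ℕ) : ℝ)) •
        (evalAt ω ((((2 * i + 1 : ℕ) : ℝ) + 1) / ((2 * N : ℕ) : ℝ))
          - evalAt ω (((2 * i + 1 : ℕ) : ℝ) / ((2 * N : ℕ) : ℝ)))) -
      clamp01 ((N : ℝ) * t - i) • (evalAt ω (((i : ℝ) + 1) / N) - evalAt ω ((i : ℝ) / N))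
      = (clamp01 (2 * ((N : ℝ) * t - i)) - clamp01 ((N : ℝ) * t - i)) • secondDiff N ω i := by
    intro i
    have e1 : ((2 * N : ℕ) : ℝ) * t - ((2 * i : ℕ) : ℝ) = 2 * ((N : ℝ) * t - i) := by
      push_cast; ring
    have e2 : ((2 * N : ℕ) : ℝ) * t - ((2 * i + 1 : ℕ) : ℝ) = 2 * ((N : ℝ) * t - i) - 1 := by
      push_cast; ring
    have e3 : ((2 * i : ℕ) : ℝ) / ((2 * N : ℕ) : ℝ) = (i : ℝ) / N := by
      push_cast; rw [mul_div_mul_left _ _ two_ne_zero]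
    have e4 : (((2 * i + 1 : ℕ) : ℝ) + 1) / ((2 * N : ℕ) : ℝ) = ((i : ℝ) + 1) / N := by
      push_cast
      rw [← mul_div_mul_left ((i : ℝ) + 1) _ two_ne_zero]
      ring_nf
    have e5 : ((((2 * i : ℕ) : ℝ) + 1) / ((2 * N : ℕ) : ℝ)) = (2 * (i : ℝ) + 1) / (2 * N) := by
      push_cast; ring
    have e6 : (((2 * i + 1 : ℕ) : ℝ) / ((2 * N : ℕ) : ℝ)) = (2 * (i : ℝ) + 1) / (2 * N) := by
      push_cast; ring
    have e7 := clamp01_two_mul_add ((N : ℝ) * t - i)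
    rw [e1, e2, e3, e4, e5, e6, eq_sub_of_add_eq' e7, secondDiff]
    module
  simp_rw [key]
  refine norm_sum_range_le_of_unit_support N ((N : ℝ) * t) _ hB ?_ ?_ ?_
  · intro i hi
    rw [clamp01_of_nonpos (by linarith), clamp01_of_nonpos (by linarith), sub_self, zero_smul]
  · intro i hi
    rw [clamp01_of_one_le (by linarith), clamp01_of_one_le (by linarith), sub_self, zero_smul]
  · intro i hi
    rw [norm_smul]
    have h1 : ‖clamp01 (2 * ((N : ℝ) * t - i)) - clamp01 ((N : ℝ) * t - i)‖ ≤ 1 := by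
      rw [Real.norm_eq_abs, abs_le]
      constructor <;> linarith [clamp01_nonneg (2 * ((N : ℝ) * t - i)),
        clamp01_le_one (2 * ((N : ℝ) * t - i)), clamp01_nonneg ((N : ℝ) * t - i),
        clamp01_le_one ((N : ℝ) * t - i)]
    calc _ ≤ 1 * ‖secondDiff N ω i‖ := by gcongr
      _ ≤ B := by rw [one_mul]; exact h i hi

lemma uniformContinuous_evalAt {d : ℕ} (ω : PathSp d) : UniformContinuous (evalAt ω) := by
  have h1 : UniformContinuous ω := CompactSpace.uniformContinuous_of_continuous ω.continuous
  exact h1.comp (LipschitzWith.projIcc zero_le_one).uniformContinuous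

lemma tendsto_gridPath {d : ℕ} (ω : PathSp d) :
    Tendsto (fun N => gridPath N ω) atTop (𝓝 ω) := by
  rw [Metric.tendsto_atTop]
  intro ε hε
  obtain ⟨δ, hδ, hω⟩ := Metric.uniformContinuous_iff.1 (uniformContinuous_evalAt ω) (ε / 4)
    (by positivity)
  obtain ⟨M, hM⟩ := exists_nat_gt (1 / δ)
  refine ⟨M + 1, fun N hN => ?_⟩
  have hN0 : (0 : ℝ) < N := by
    have : 0 < N := by omega
    exact_mod_cast this
  have hNδ : 1 / (N : ℝ) < δ := by
    rw [div_lt_comm₀ hN0 hδ]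
    refine hM.trans_le ?_
    exact_mod_cast (Nat.le_succ M).trans hN
  refine lt_of_le_of_lt ?_ (half_lt_self hε)
  rw [ContinuousMap.dist_le (by positivity)]
  intro t
  have ht0 : (0 : ℝ) ≤ t := t.2.1
  have ht1 : (t : ℝ) ≤ 1 := t.2.2
  have htel : ω t = ω 0 + ∑ i ∈ Finset.range N,
      (evalAt ω (min ((i + 1 : ℕ) / N : ℝ) t) - evalAt ω (min ((i : ℕ) / N : ℝ) t)) := by
    rw [Finset.sum_range_sub (fun i : ℕ => evalAt ω (min ((i : ℕ) / N : ℝ) t)),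
      div_self hN0.ne', min_eq_right ht1, Nat.cast_zero, zero_div, min_eq_left ht0,
      evalAt_zero, evalAt_coe, add_sub_cancel]
  have hev : ∀ r s : ℝ, |r - s| ≤ 1 / N → ‖evalAt ω r - evalAt ω s‖ ≤ ε / 4 := fun r s hrs => by
    rw [← dist_eq_norm]
    exact (hω (by rw [Real.dist_eq]; exact hrs.trans_lt hNδ)).le
  have hstep : ∀ i : ℕ, ((i : ℝ) + 1) / N = i / N + 1 / N := fun i => by ring
  have hpos : 0 < 1 / (N : ℝ) := by positivity
  rw [dist_eq_norm, gridPath_apply, htel, add_sub_add_left_eq_sub, ← Finset.sum_sub_distrib]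
  refine norm_sum_range_le_of_unit_support N ((N : ℝ) * t) _ (by positivity) ?_ ?_ ?_
  · intro i hi
    have h1 : (t : ℝ) ≤ i / N := by rw [le_div_iff₀ hN0]; linarith
    have h2 : (t : ℝ) ≤ ((i + 1 : ℕ) : ℝ) / N := by push_cast; linarith [hstep i]
    rw [clamp01_of_nonpos (by linarith), zero_smul, min_eq_right h1, min_eq_right h2]
    simp
  · intro i hi
    have h1 : ((i : ℝ) + 1) / N ≤ t := by rw [div_le_iff₀ hN0]; linarith
    have h2 : (i : ℝ) / N ≤ t := by linarith [hstep i]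
    rw [clamp01_of_one_le (by linarith), one_smul, min_eq_left h2, Nat.cast_succ, min_eq_left h1]
    simp
  · intro i hi
    refine (norm_sub_le _ _).trans ?_
    have h1 : ‖clamp01 ((N : ℝ) * t - i) •
        (evalAt ω (((i : ℝ) + 1) / N) - evalAt ω ((i : ℝ) / N))‖ ≤ ε / 4 := by
      rw [norm_smul, Real.norm_of_nonneg (clamp01_nonneg _)]
      have := hev (((i : ℝ) + 1) / N) ((i : ℝ) / N) (by
        rw [hstep, add_sub_cancel_left, abs_of_pos hpos])
      calc _ ≤ 1 * (ε / 4) := by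
            gcongr
            exact clamp01_le_one _
        _ = ε / 4 := one_mul _
    have h2 : ‖evalAt ω (min ((i + 1 : ℕ) / N : ℝ) t) - evalAt ω (min ((i : ℕ) / N : ℝ) t)‖
        ≤ ε / 4 := by
      apply hev
      refine (abs_min_sub_min_le_max _ _ _ _).trans ?_
      push_cast
      rw [hstep, add_sub_cancel_left, abs_of_pos hpos, sub_self, abs_zero, max_eq_left hpos.le]
    linarith

lemma norm_stepVec {d : ℕ} (a : ℝ) (p : Fin d × Bool) : ‖stepVec a p‖ = |a| := by
  rcases p with ⟨k, _ | _⟩ <;> simp [stepVec, norm_smul]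

lemma stepVec_false {d : ℕ} (a : ℝ) (k : Fin d) : stepVec a (k, false) = -stepVec a (k, true) := by
  simp [stepVec]

lemma sum_norm_add_smul_stepVec_sq {d : ℕ} (S : Ed d) (c a : ℝ) :
    ∑ p : Fin d × Bool, ‖S + c • stepVec a p‖ ^ 2 = (2 * d) * (‖S‖ ^ 2 + c ^ 2 * a ^ 2) := by
  have h : ∀ k : Fin d, ∑ b : Bool, ‖S + c • stepVec a (k, b)‖ ^ 2
      = 2 * (‖S‖ ^ 2 + c ^ 2 * a ^ 2) := fun k => by
    have hn : ‖c • stepVec a (k, true)‖ ^ 2 = c ^ 2 * a ^ 2 := by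
      rw [norm_smul, norm_stepVec, mul_pow, Real.norm_eq_abs, sq_abs, sq_abs]
    rw [Fintype.sum_bool, stepVec_false, smul_neg, ← sub_eq_add_neg, norm_add_sq_real,
      norm_sub_sq_real, hn]
    ring
  rw [Fintype.sum_prod_type, Finset.sum_congr rfl fun k _ => h k]
  simp
  ring

lemma sum_norm_add_smul_stepVec_pow_four_le {d : ℕ} (S : Ed d) (c a : ℝ) :
    ∑ p : Fin d × Bool, ‖S + c • stepVec a p‖ ^ 4
      ≤ (2 * d) * (‖S‖ ^ 4 + 6 * (c ^ 2 * a ^ 2) * ‖S‖ ^ 2 + (c ^ 2 * a ^ 2) ^ 2) := by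
  have h : ∀ k : Fin d, ∑ b : Bool, ‖S + c • stepVec a (k, b)‖ ^ 4
      ≤ 2 * (‖S‖ ^ 4 + 6 * (c ^ 2 * a ^ 2) * ‖S‖ ^ 2 + (c ^ 2 * a ^ 2) ^ 2) := fun k => by
    set w := c • stepVec a (k, true) with hw
    have hn : ‖w‖ ^ 2 = c ^ 2 * a ^ 2 := by
      rw [hw, norm_smul, norm_stepVec, mul_pow, Real.norm_eq_abs, sq_abs, sq_abs]
    have hcs : ⟪S, w⟫ ^ 2 ≤ ‖S‖ ^ 2 * ‖w‖ ^ 2 := by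
      rw [← mul_pow, ← sq_abs]
      gcongr
      exact abs_real_inner_le_norm S w
    have e : ∀ v : Ed d, ‖v‖ ^ 4 = (‖v‖ ^ 2) ^ 2 := fun v => by ring
    rw [Fintype.sum_bool, stepVec_false, smul_neg, ← sub_eq_add_neg, ← hw, e, e, e,
      norm_add_sq_real, norm_sub_sq_real, ← hn]
    nlinarith
  rw [Fintype.sum_prod_type]
  refine (Finset.sum_le_sum fun k _ => h k).trans (le_of_eq ?_)
  simp
  ring

lemma sum_fin_succ_pi {P M : Type*} [Fintype P] [AddCommMonoid M] {N : ℕ}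
    (G : (Fin (N + 1) → P) → M) :
    ∑ s, G s = ∑ s' : Fin N → P, ∑ p : P, G (Fin.cons p s') := by
  rw [← (Fin.consEquiv fun _ : Fin (N + 1) => P).sum_comp, Fintype.sum_prod_type,
    Finset.sum_comm]
  rfl

lemma sum_norm_walk_sq {d : ℕ} (a : ℝ) {N : ℕ} (c : Fin N → ℝ) :
    ∑ s : Fin N → Fin d × Bool, ‖∑ i, c i • stepVec a (s i)‖ ^ 2
      = (2 * d) ^ N * (a ^ 2 * ∑ i, c i ^ 2) := by
  induction N with
  | zero => simp
  | succ N ih =>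
    rw [sum_fin_succ_pi]
    simp_rw [Fin.sum_univ_succ, Fin.cons_zero, Fin.cons_succ]
    simp_rw [add_comm (c 0 • _), sum_norm_add_smul_stepVec_sq]
    rw [← Finset.mul_sum, Finset.sum_add_distrib, ih]
    simp
    ring

lemma sum_norm_walk_pow_four_le {d : ℕ} (a : ℝ) {N : ℕ} (c : Fin N → ℝ) :
    ∑ s : Fin N → Fin d × Bool, ‖∑ i, c i • stepVec a (s i)‖ ^ 4
      ≤ (2 * d) ^ N * (3 * (a ^ 2 * ∑ i, c i ^ 2) ^ 2) := by
  induction N with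
  | zero => simp
  | succ N ih =>
    rw [sum_fin_succ_pi]
    simp_rw [Fin.sum_univ_succ, Fin.cons_zero, Fin.cons_succ]
    simp_rw [add_comm (c 0 • _)]
    refine (Finset.sum_le_sum fun s' _ => sum_norm_add_smul_stepVec_pow_four_le _ (c 0) a).trans ?_
    rw [← Finset.mul_sum, Finset.sum_add_distrib, Finset.sum_add_distrib, ← Finset.mul_sum,
      sum_norm_walk_sq]
    have := ih (fun i => c i.succ)
    simp only [Finset.sum_const, Finset.card_univ, Fintype.card_pi, Fintype.card_prod,
      Fintype.card_fin, Fintype.card_bool, Finset.prod_const, nsmul_eq_mul]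
    push_cast
    rw [mul_comm (d : ℝ) 2]
    have hd : (0 : ℝ) ≤ (2 * d) ^ N := by positivity
    have hd' : (0 : ℝ) ≤ 2 * d := by positivity
    set q := ∑ i : Fin N, c i.succ ^ 2
    calc _ ≤ (2 * (d : ℝ)) * ((2 * d) ^ N * (3 * (a ^ 2 * q) ^ 2)
          + 6 * (c 0 ^ 2 * a ^ 2) * ((2 * d) ^ N * (a ^ 2 * q))
          + (2 * d) ^ N * (c 0 ^ 2 * a ^ 2) ^ 2) := by gcongr
      _ = (2 * d) ^ (N + 1) * (3 * (a ^ 2 * (c 0 ^ 2 + q)) ^ 2 - 2 * (c 0 ^ 2 * a ^ 2) ^ 2) := by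
        ring
      _ ≤ _ := by
        gcongr
        nlinarith [sq_nonneg (c 0 ^ 2 * a ^ 2)]

lemma evalAt_pwLinE {d : ℕ} (x : Ed d) (N : ℕ) (v : Fin N → Ed d) {r : ℝ} (h0 : 0 ≤ r)
    (h1 : r ≤ 1) :
    evalAt (pwLinE x N v) r = x + ∑ i : Fin N, clamp01 ((N : ℝ) * r - ((i : ℕ) : ℝ)) • v i := by
  rw [evalAt, Set.projIcc_of_mem zero_le_one ⟨h0, h1⟩]
  rfl

lemma sum_norm_secondDiff_walk_le {d : ℕ} (x : Ed d) (a : ℝ) (N : ℕ) {K j : ℕ} (hj : j < K) :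
    ∑ s : Fin N → Fin d × Bool, ‖secondDiff K (pwLinE x N fun i => stepVec a (s i)) j‖ ^ 4
      ≤ (2 * d) ^ N * (3 * (a ^ 2 * (N / K)) ^ 2) := by
  have hK : (0 : ℝ) < K := by
    have : 0 < K := by omega
    exact_mod_cast this
  have hjK : (j : ℝ) + 1 ≤ K := by exact_mod_cast hj
  have hj0 : (0 : ℝ) ≤ j := Nat.cast_nonneg j
  have hN0 : (0 : ℝ) ≤ N := Nat.cast_nonneg N
  set l : ℝ := j / K with hl
  set r : ℝ := (j + 1) / K with hr
  set p : ℝ := (2 * j + 1) / (2 * K) with hp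
  have hrl : r = l + 1 / K := by rw [hr, hl]; ring
  have hlp : l ≤ p := by
    rw [hl, hp, div_le_div_iff₀ hK (by positivity)]
    nlinarith
  have hpr : p ≤ r := by
    rw [hr, hp, div_le_div_iff₀ (by positivity) hK]
    nlinarith
  have hl0 : 0 ≤ l := by positivity
  have hr1 : r ≤ 1 := by rw [hr, div_le_one hK]; exact hjK
  have hsd : ∀ s : Fin N → Fin d × Bool,
      secondDiff K (pwLinE x N fun i => stepVec a (s i)) j = ∑ i : Fin N,
        (2 * clamp01 ((N : ℝ) * p - ((i : ℕ) : ℝ)) - clamp01 ((N : ℝ) * l - ((i : ℕ) : ℝ))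
          - clamp01 ((N : ℝ) * r - ((i : ℕ) : ℝ))) • stepVec a (s i) := fun s => by
    rw [secondDiff, evalAt_pwLinE _ _ _ (by linarith) (by linarith),
      evalAt_pwLinE _ _ _ hl0 (by linarith), evalAt_pwLinE _ _ _ (by linarith) hr1]
    simp_rw [sub_smul, Finset.sum_sub_distrib, mul_smul, ← Finset.smul_sum]
    module
  simp_rw [hsd]
  refine (sum_norm_walk_pow_four_le a _).trans ?_
  have hc : ∑ i : Fin N,
      (2 * clamp01 ((N : ℝ) * p - ((i : ℕ) : ℝ)) - clamp01 ((N : ℝ) * l - ((i : ℕ) : ℝ))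
          - clamp01 ((N : ℝ) * r - ((i : ℕ) : ℝ))) ^ 2 ≤ (N : ℝ) / K := by
    calc _ ≤ ∑ i : Fin N, (clamp01 ((N : ℝ) * r - ((i : ℕ) : ℝ))
            - clamp01 ((N : ℝ) * l - ((i : ℕ) : ℝ))) := by
          refine Finset.sum_le_sum fun i _ => ?_
          have h1 : clamp01 ((N : ℝ) * l - ((i : ℕ) : ℝ)) ≤ clamp01 ((N : ℝ) * p - ((i : ℕ) : ℝ)) :=
            clamp01_mono (by gcongr)
          have h2 : clamp01 ((N : ℝ) * p - ((i : ℕ) : ℝ)) ≤ clamp01 ((N : ℝ) * r - ((i : ℕ) : ℝ)) :=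
            clamp01_mono (by gcongr)
          have h3 := clamp01_nonneg ((N : ℝ) * l - ((i : ℕ) : ℝ))
          have h4 := clamp01_le_one ((N : ℝ) * r - ((i : ℕ) : ℝ))
          nlinarith
      _ = N / K := by
          rw [Finset.sum_sub_distrib, sum_clamp01 (by positivity) (by nlinarith),
            sum_clamp01 (by positivity) (by nlinarith), hrl]
          ring
  have hc0 : 0 ≤ ∑ i : Fin N,
      (2 * clamp01 ((N : ℝ) * p - ((i : ℕ) : ℝ)) - clamp01 ((N : ℝ) * l - ((i : ℕ) : ℝ))
          - clamp01 ((N : ℝ) * r - ((i : ℕ) : ℝ))) ^ 2 := by positivity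
  gcongr

lemma le_add_pow_four_div {y c : ℝ} (hy : 0 ≤ y) (hc : 0 < c) : y ≤ c + y ^ 4 / c ^ 3 := by
  rcases le_total y c with h | h
  · have : 0 ≤ y ^ 4 / c ^ 3 := by positivity
    linarith
  · have : y ≤ y ^ 4 / c ^ 3 := by
      rw [le_div_iff₀ (by positivity)]
      calc y * c ^ 3 ≤ y * y ^ 3 := by gcongr
        _ = y ^ 4 := by ring
    linarith

lemma sum_dist_gridPath_walk_le {d : ℕ} (x : Ed d) (a : ℝ) (N : ℕ) {K : ℕ} (hK : 0 < K)
    {c : ℝ} (hc : 0 < c) :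
    ∑ s : Fin N → Fin d × Bool,
      dist (gridPath (2 * K) (pwLinE x N fun i => stepVec a (s i)))
        (gridPath K (pwLinE x N fun i => stepVec a (s i)))
      ≤ (2 * d) ^ N * (c + 3 * (a ^ 2 * N) ^ 2 / (K * c ^ 3)) := by
  calc _ ≤ ∑ s : Fin N → Fin d × Bool, (c + ∑ j ∈ Finset.range K,
          ‖secondDiff K (pwLinE x N fun i => stepVec a (s i)) j‖ ^ 4 / c ^ 3) := by
        refine Finset.sum_le_sum fun s _ => ?_
        refine dist_gridPath_two_mul_le K _ (by positivity) fun j hj => ?_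
        refine (le_add_pow_four_div (norm_nonneg _) hc).trans ?_
        gcongr
        exact Finset.single_le_sum
          (f := fun j => ‖secondDiff K (pwLinE x N fun i => stepVec a (s i)) j‖ ^ 4 / c ^ 3)
          (fun j _ => by positivity) (Finset.mem_range.2 hj)
    _ = (2 * d) ^ N * c + ∑ j ∈ Finset.range K, (∑ s : Fin N → Fin d × Bool,
          ‖secondDiff K (pwLinE x N fun i => stepVec a (s i)) j‖ ^ 4) / c ^ 3 := by
        rw [Finset.sum_add_distrib, Finset.sum_comm]
        simp [Finset.sum_div, mul_comm]
    _ ≤ (2 * d) ^ N * c + ∑ j ∈ Finset.range K,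
          ((2 * d) ^ N * (3 * (a ^ 2 * (N / K)) ^ 2)) / c ^ 3 := by
        gcongr with j hj
        exact sum_norm_secondDiff_walk_le x a N (Finset.mem_range.1 hj)
    _ = _ := by
        rw [Finset.sum_const, Finset.card_range, nsmul_eq_mul]
        have : (K : ℝ) ≠ 0 := by exact_mod_cast hK.ne'
        field_simp

lemma sum_dist_gridPath_two_pow_succ_walk_le {d : ℕ} (x : Ed d) (a : ℝ) (N n : ℕ) :
    ∑ s : Fin N → Fin d × Bool,
      dist (gridPath (2 ^ (n + 1)) (pwLinE x N fun i => stepVec a (s i)))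
        (gridPath (2 ^ n) (pwLinE x N fun i => stepVec a (s i)))
      ≤ (2 * d) ^ N * ((1 + 3 * (a ^ 2 * N) ^ 2) * (9 / 10) ^ n) := by
  have h := sum_dist_gridPath_walk_le x a N (K := 2 ^ n) (by positivity)
    (c := (9 / 10 : ℝ) ^ n) (by positivity)
  rw [pow_succ' 2 n]
  refine h.trans ?_
  rw [add_mul, one_mul]
  have hpow : (1 : ℝ) ≤ (9 / 10) ^ n * (((2 ^ n : ℕ) : ℝ) * ((9 / 10) ^ n) ^ 3) := by
    have : (9 / 10 : ℝ) ^ n * (((2 ^ n : ℕ) : ℝ) * ((9 / 10) ^ n) ^ 3)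
        = ((9 / 10) * (2 * (9 / 10) ^ 3)) ^ n := by
      push_cast
      rw [← pow_mul, mul_comm n 3, pow_mul, ← mul_pow, ← mul_pow]
    rw [this]
    exact one_le_pow₀ (by norm_num)
  gcongr
  rw [div_le_iff₀ (by positivity), mul_assoc]
  exact le_mul_of_one_le_right (by positivity) hpow

/-- Uniform approximation of lattice walks by their dyadic interpolations, in mean. -/
lemma sum_dist_walk_gridPath_le {d : ℕ} (x : Ed d) (a : ℝ) (N n : ℕ) :
    ∑ s : Fin N → Fin d × Bool,
      dist (pwLinE x N fun i => stepVec a (s i))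
        (gridPath (2 ^ n) (pwLinE x N fun i => stepVec a (s i)))
      ≤ (2 * d) ^ N * (10 * (1 + 3 * (a ^ 2 * N) ^ 2) * (9 / 10) ^ n) := by
  set ω : (Fin N → Fin d × Bool) → PathSp d := fun s => pwLinE x N fun i => stepVec a (s i)
  set C : ℝ := 1 + 3 * (a ^ 2 * N) ^ 2
  have hC : 0 ≤ C := by positivity
  have hlim : Tendsto (fun k => ∑ s, dist (gridPath (2 ^ (n + k)) (ω s)) (gridPath (2 ^ n) (ω s)))
      atTop (𝓝 (∑ s, dist (ω s) (gridPath (2 ^ n) (ω s)))) := by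
    refine tendsto_finsetSum _ fun s _ => ?_
    refine Tendsto.dist ?_ tendsto_const_nhds
    refine (tendsto_gridPath (ω s)).comp ?_
    exact (tendsto_pow_atTop_atTop_of_one_lt one_lt_two).comp
      (tendsto_atTop_mono (fun k => Nat.le_add_left k n) tendsto_id)
  refine le_of_tendsto' hlim fun k => ?_
  calc _ ≤ ∑ s, ∑ j ∈ Finset.range k,
          dist (gridPath (2 ^ (n + j + 1)) (ω s)) (gridPath (2 ^ (n + j)) (ω s)) := by
        refine Finset.sum_le_sum fun s _ => ?_
        have := dist_le_range_sum_dist (fun j => gridPath (2 ^ (n + j)) (ω s)) k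
        rw [dist_comm]
        refine this.trans (le_of_eq (Finset.sum_congr rfl fun j _ => dist_comm _ _))
    _ = ∑ j ∈ Finset.range k, ∑ s,
          dist (gridPath (2 ^ (n + j + 1)) (ω s)) (gridPath (2 ^ (n + j)) (ω s)) :=
        Finset.sum_comm
    _ ≤ ∑ j ∈ Finset.range k, (2 * d) ^ N * (C * (9 / 10) ^ (n + j)) :=
        Finset.sum_le_sum fun j _ => sum_dist_gridPath_two_pow_succ_walk_le x a N (n + j)
    _ = (2 * d) ^ N * (C * (9 / 10) ^ n * ∑ j ∈ Finset.range k, (9 / 10 : ℝ) ^ j) := by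
        simp_rw [Finset.mul_sum, pow_add, mul_assoc]
    _ ≤ (2 * d) ^ N * (C * (9 / 10) ^ n * 10) := by
        gcongr
        refine (Summable.sum_le_tsum _ (fun j _ => by positivity)
          (summable_geometric_of_lt_one (by norm_num) (by norm_num))).trans ?_
        rw [tsum_geometric_of_lt_one (by norm_num) (by norm_num)]
        norm_num
    _ = _ := by ring

lemma integral_VxaN {d : ℕ} {E : Type*} [NormedAddCommGroup E] [NormedSpace ℝ E]
    [CompleteSpace E] (hd : 1 ≤ d)
    (x : Ed d) (a : ℝ) (N : ℕ) (g : Omega1 x → E) :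
    ∫ ω, g ω ∂(VxaN x a N) = (((2 * d : ℝ)) ^ N)⁻¹ •
      ∑ s : Fin N → Fin d × Bool, g (pwLin1 x N fun i => stepVec a (s i)) := by
  have hc : (((2 * d : ℕ) : ℝ≥0∞) ^ N)⁻¹ ≠ ∞ := by
    rw [ENNReal.inv_ne_top]
    have : ((2 * d : ℕ) : ℝ≥0∞) ≠ 0 := by
      rw [Nat.cast_ne_zero]
      omega
    positivity
  rw [VxaN, Measure.sum_fintype, integral_finsetSum_measure]
  · simp_rw [integral_smul_measure, integral_dirac]
    rw [Finset.smul_sum]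
    simp
  · intro s _
    exact (integrable_dirac enorm_lt_top).smul_measure hc

lemma isProbabilityMeasure_VxaN {d : ℕ} (hd : 1 ≤ d) (x : Ed d) (a : ℝ) (N : ℕ) :
    IsProbabilityMeasure (VxaN x a N) := by
  constructor
  have : ((2 * d : ℕ) : ℝ≥0∞) ≠ 0 := by
    rw [Nat.cast_ne_zero]
    omega
  rw [VxaN, Measure.sum_fintype, Measure.finsetSum_apply]
  simp only [Measure.smul_apply, measure_univ, smul_eq_mul, mul_one, Finset.sum_const,
    Finset.card_univ, Fintype.card_pi, Fintype.card_prod, Fintype.card_fin, Fintype.card_bool,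
    Finset.prod_const, nsmul_eq_mul]
  rw [mul_comm d 2, Nat.cast_pow]
  exact ENNReal.mul_inv_cancel (by positivity) (by finiteness)

/-- The characteristic function of a single lattice step of length `a`. -/
def stepChar {d : ℕ} (a : ℝ) (θ : Ed d) : ℝ := (d : ℝ)⁻¹ * ∑ k : Fin d, Real.cos (a * θ k)

lemma sum_exp_inner_stepVec {d : ℕ} (hd : 1 ≤ d) (a : ℝ) (θ : Ed d) :
    ∑ p : Fin d × Bool, Complex.exp (Complex.I * ((⟪θ, stepVec a p⟫ : ℝ) : ℂ))
      = (2 * d : ℂ) * (stepChar a θ : ℂ) := by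
  have hd0 : (d : ℂ) ≠ 0 := by
    rw [Nat.cast_ne_zero]
    omega
  have h : ∀ k : Fin d, ∑ b : Bool, Complex.exp (Complex.I * ((⟪θ, stepVec a (k, b)⟫ : ℝ) : ℂ))
      = 2 * Complex.cos ((a * θ k : ℝ) : ℂ) := fun k => by
    have e : ⟪θ, stepVec a (k, true)⟫ = a * θ k := by
      simp [stepVec, inner_smul_right, EuclideanSpace.inner_single_right]
    rw [Fintype.sum_bool, stepVec_false, inner_neg_right, e, Complex.two_cos]
    push_cast
    ring_nf
  rw [Fintype.sum_prod_type, Finset.sum_congr rfl fun k _ => h k, stepChar, ← Finset.mul_sum]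
  push_cast
  field_simp

/-- The frequency seen by the `i`-th step of an `N`-step path tested against `ξ` at times `τ`. -/
def stepFreq {d n : ℕ} (N : ℕ) (τ : Fin n → ℝ) (ξ : Fin n → Ed d) (i : Fin N) : Ed d :=
  ∑ j, clamp01 ((N : ℝ) * τ j - ((i : ℕ) : ℝ)) • ξ j

lemma sum_inner_evalAt_pwLinE {d n : ℕ} (x : Ed d) (N : ℕ) (v : Fin N → Ed d) (τ : Fin n → ℝ)
    (h0 : ∀ j, 0 ≤ τ j) (h1 : ∀ j, τ j ≤ 1) (ξ : Fin n → Ed d) :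
    ∑ j, ⟪ξ j, evalAt (pwLinE x N v) (τ j)⟫
      = ⟪∑ j, ξ j, x⟫ + ∑ i, ⟪stepFreq N τ ξ i, v i⟫ := by
  simp_rw [evalAt_pwLinE x N v (h0 _) (h1 _), stepFreq, inner_add_right, inner_sum, sum_inner,
    Finset.sum_add_distrib, inner_smul_left, inner_smul_right]
  congr 1
  exact Finset.sum_comm

lemma integral_exp_VxaN {d n : ℕ} (hd : 1 ≤ d) (x : Ed d) (a : ℝ) (N : ℕ) (τ : Fin n → ℝ)
    (h0 : ∀ j, 0 ≤ τ j) (h1 : ∀ j, τ j ≤ 1) (ξ : Fin n → Ed d) :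
    ∫ ω : Omega1 x, Complex.exp (Complex.I * ((∑ j, ⟪ξ j, evalAt ω.1 (τ j)⟫ : ℝ) : ℂ))
        ∂(VxaN x a N)
      = ((∏ i, stepChar a (stepFreq N τ ξ i) : ℝ) : ℂ)
        * Complex.exp (Complex.I * ((⟪∑ j, ξ j, x⟫ : ℝ) : ℂ)) := by
  have hd0 : (d : ℂ) ≠ 0 := by
    rw [Nat.cast_ne_zero]
    omega
  rw [integral_VxaN hd]
  have hs : ∀ s : Fin N → Fin d × Bool, Complex.exp (Complex.I *
      ((∑ j, ⟪ξ j, evalAt (pwLin1 x N fun i => stepVec a (s i)).1 (τ j)⟫ : ℝ) : ℂ))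
      = Complex.exp (Complex.I * ((⟪∑ j, ξ j, x⟫ : ℝ) : ℂ)) *
        ∏ i, Complex.exp (Complex.I * ((⟪stepFreq N τ ξ i, stepVec a (s i)⟫ : ℝ) : ℂ)) :=
    fun s => by
    rw [← Complex.exp_sum, ← Complex.exp_add, pwLin1, sum_inner_evalAt_pwLinE x N _ τ h0 h1,
      ← Finset.mul_sum]
    push_cast
    ring_nf
  simp_rw [hs]
  rw [← Finset.mul_sum, ← Fintype.prod_sum
    (fun i p => Complex.exp (Complex.I * ((⟪stepFreq N τ ξ i, stepVec a p⟫ : ℝ) : ℂ)))]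
  simp_rw [sum_exp_inner_stepVec hd]
  rw [Finset.prod_mul_distrib, Finset.prod_const, Finset.card_univ, Fintype.card_fin,
    Complex.real_smul]
  push_cast
  field_simp

lemma abs_stepChar_sub_exp_le {d : ℕ} (hd : 1 ≤ d) {a : ℝ} {θ : Ed d} (h : |a| * ‖θ‖ ≤ 1) :
    |stepChar a θ - Real.exp (-(a ^ 2 * ‖θ‖ ^ 2 / (2 * d)))| ≤ 2 * (a ^ 4 * ‖θ‖ ^ 4) := by
  have hd1 : (1 : ℝ) ≤ d := by exact_mod_cast hd
  have hd0 : (0 : ℝ) < d := by linarith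
  have hk : ∀ k, |a * θ k| ≤ |a| * ‖θ‖ := fun k => by
    rw [abs_mul]
    gcongr
    exact PiLp.norm_apply_le θ k
  have ha4 : (|a| * ‖θ‖) ^ 4 = a ^ 4 * ‖θ‖ ^ 4 := by
    rw [mul_pow, Even.pow_abs (by decide)]
  have h2 : (|a| * ‖θ‖) ^ 2 = a ^ 2 * ‖θ‖ ^ 2 := by rw [mul_pow, sq_abs]
  have hcos : |stepChar a θ - (1 - a ^ 2 * ‖θ‖ ^ 2 / (2 * d))| ≤ a ^ 4 * ‖θ‖ ^ 4 := by
    have e : stepChar a θ - (1 - a ^ 2 * ‖θ‖ ^ 2 / (2 * d))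
        = (d : ℝ)⁻¹ * ∑ k : Fin d, (Real.cos (a * θ k) - (1 - (a * θ k) ^ 2 / 2)) := by
      rw [EuclideanSpace.real_norm_sq_eq, stepChar]
      simp_rw [Finset.sum_sub_distrib, mul_pow]
      rw [← Finset.sum_div, ← Finset.mul_sum]
      simp
      field_simp
    rw [e, abs_mul, abs_of_pos (inv_pos.2 hd0), inv_mul_le_iff₀ hd0]
    refine (Finset.abs_sum_le_sum_abs _ _).trans ?_
    calc _ ≤ ∑ k : Fin d, a ^ 4 * ‖θ‖ ^ 4 := by
          refine Finset.sum_le_sum fun k _ => ?_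
          refine (Real.cos_bound ((hk k).trans h)).trans ?_
          have : |a * θ k| ^ 4 ≤ (|a| * ‖θ‖) ^ 4 := by
            gcongr
            exact hk k
          rw [← ha4]
          nlinarith [pow_nonneg (abs_nonneg (a * θ k)) 4]
      _ = _ := by simp
  set u : ℝ := a ^ 2 * ‖θ‖ ^ 2 / (2 * d) with hu
  have hu0 : 0 ≤ u := by positivity
  have hu2 : u ≤ a ^ 2 * ‖θ‖ ^ 2 := div_le_self (by positivity) (by linarith)
  have hu1 : u ≤ 1 := hu2.trans (by
    rw [← h2]
    exact pow_le_one₀ (by positivity) h)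
  have hexp : |Real.exp (-u) - 1 - -u| ≤ a ^ 4 * ‖θ‖ ^ 4 := by
    refine (Real.abs_exp_sub_one_sub_id_le (by rwa [abs_neg, abs_of_nonneg hu0])).trans ?_
    calc (-u) ^ 2 = u ^ 2 := by ring
      _ ≤ (a ^ 2 * ‖θ‖ ^ 2) ^ 2 := by gcongr
      _ = _ := by ring
  rw [abs_le] at *
  constructor <;> linarith [hcos.1, hcos.2, hexp.1, hexp.2]

lemma abs_prod_sub_prod_le {ι : Type*} (s : Finset ι) (z w : ι → ℝ) (hz : ∀ i, |z i| ≤ 1)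
    (hw : ∀ i, |w i| ≤ 1) : |∏ i ∈ s, z i - ∏ i ∈ s, w i| ≤ ∑ i ∈ s, |z i - w i| := by
  classical
  induction s using Finset.induction_on with
  | empty => simp
  | insert i s hi ih =>
    rw [Finset.prod_insert hi, Finset.prod_insert hi, Finset.sum_insert hi]
    have e : z i * ∏ j ∈ s, z j - w i * ∏ j ∈ s, w j
        = (z i - w i) * ∏ j ∈ s, z j + w i * (∏ j ∈ s, z j - ∏ j ∈ s, w j) := by ring
    have hp : |∏ j ∈ s, z j| ≤ 1 := by
      rw [Finset.abs_prod]
      exact Finset.prod_le_one (fun j _ => abs_nonneg _) fun j _ => hz j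
    rw [e]
    refine (abs_add_le _ _).trans ?_
    rw [abs_mul, abs_mul]
    have h1 : |z i - w i| * |∏ j ∈ s, z j| ≤ |z i - w i| :=
      mul_le_of_le_one_right (abs_nonneg _) hp
    have h2 : |w i| * |∏ j ∈ s, z j - ∏ j ∈ s, w j| ≤ ∑ j ∈ s, |z j - w j| :=
      (mul_le_of_le_one_left (abs_nonneg _) (hw i)).trans ih
    linarith

lemma abs_stepChar_le_one {d : ℕ} (hd : 1 ≤ d) (a : ℝ) (θ : Ed d) : |stepChar a θ| ≤ 1 := by
  have hd0 : (0 : ℝ) < d := by exact_mod_cast hd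
  rw [stepChar, abs_mul, abs_of_pos (inv_pos.2 hd0), inv_mul_le_iff₀ hd0]
  refine (Finset.abs_sum_le_sum_abs _ _).trans ?_
  refine (Finset.sum_le_sum fun k _ => Real.abs_cos_le_one _).trans ?_
  simp

lemma norm_stepFreq_le {d n : ℕ} (N : ℕ) (τ : Fin n → ℝ) (ξ : Fin n → Ed d) (i : Fin N) :
    ‖stepFreq N τ ξ i‖ ≤ ∑ j, ‖ξ j‖ := by
  refine (norm_sum_le _ _).trans (Finset.sum_le_sum fun j _ => ?_)
  rw [norm_smul, Real.norm_of_nonneg (clamp01_nonneg _)]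
  exact mul_le_of_le_one_left (norm_nonneg _) (clamp01_le_one _)

lemma abs_sum_clamp01_mul_sub_le {N : ℕ} {u v : ℝ} (hu : 0 ≤ u) (huv : u ≤ v) (hv : v ≤ N) :
    |∑ i : Fin N, clamp01 (u - ((i : ℕ) : ℝ)) * clamp01 (v - ((i : ℕ) : ℝ)) - u| ≤ 1 := by
  have e : ∑ i : Fin N, clamp01 (u - ((i : ℕ) : ℝ)) * clamp01 (v - ((i : ℕ) : ℝ)) - u
      = ∑ i ∈ Finset.range N, clamp01 (u - (i : ℝ)) * (clamp01 (v - (i : ℝ)) - 1) := by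
    rw [Finset.sum_range, ← sum_clamp01 hu (huv.trans hv), ← Finset.sum_sub_distrib]
    refine Finset.sum_congr rfl fun i _ => ?_
    rw [sum_clamp01 hu (huv.trans hv)]
    ring
  rw [e, ← Real.norm_eq_abs]
  refine norm_sum_range_le_of_unit_support N u _ zero_le_one ?_ ?_ ?_
  · intro i hi
    rw [clamp01_of_nonpos (by linarith), zero_mul]
  · intro i hi
    rw [clamp01_of_one_le (r := v - i) (by linarith), sub_self, mul_zero]
  · intro i _
    rw [norm_mul, Real.norm_eq_abs, Real.norm_eq_abs]
    refine mul_le_one₀ ?_ (abs_nonneg _) ?_ <;> rw [abs_le] <;> constructor <;>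
      linarith [clamp01_nonneg (u - i), clamp01_le_one (u - i), clamp01_nonneg (v - i),
        clamp01_le_one (v - i)]

lemma abs_sum_norm_stepFreq_sq_sub_le {d n : ℕ} (N : ℕ) (τ : Fin n → ℝ) (h0 : ∀ j, 0 ≤ τ j)
    (h1 : ∀ j, τ j ≤ 1) (ξ : Fin n → Ed d) :
    |∑ i : Fin N, ‖stepFreq N τ ξ i‖ ^ 2 - N * ∑ j, ∑ l, min (τ j) (τ l) * ⟪ξ j, ξ l⟫|
      ≤ ∑ j, ∑ l, |⟪ξ j, ξ l⟫| := by
  have hN : (0 : ℝ) ≤ N := Nat.cast_nonneg N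
  have e : ∑ i : Fin N, ‖stepFreq N τ ξ i‖ ^ 2 = ∑ j, ∑ l, (∑ i : Fin N,
      clamp01 ((N : ℝ) * τ j - ((i : ℕ) : ℝ)) * clamp01 ((N : ℝ) * τ l - ((i : ℕ) : ℝ)))
        * ⟪ξ j, ξ l⟫ := by
    simp_rw [← real_inner_self_eq_norm_sq, stepFreq, sum_inner, inner_sum, inner_smul_left,
      inner_smul_right, Finset.sum_mul]
    rw [Finset.sum_comm]
    refine Finset.sum_congr rfl fun j _ => ?_
    rw [Finset.sum_comm]
    refine Finset.sum_congr rfl fun l _ => Finset.sum_congr rfl fun i _ => ?_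
    simp
    ring
  have hjl : ∀ j l, |∑ i : Fin N, clamp01 ((N : ℝ) * τ j - ((i : ℕ) : ℝ)) *
      clamp01 ((N : ℝ) * τ l - ((i : ℕ) : ℝ)) - N * min (τ j) (τ l)| ≤ 1 := by
    intro j l
    rcases le_total (τ j) (τ l) with h | h
    · rw [min_eq_left h]
      exact abs_sum_clamp01_mul_sub_le (mul_nonneg hN (h0 j)) (by gcongr)
        (mul_le_of_le_one_right hN (h1 l))
    · rw [min_eq_right h]
      simp_rw [mul_comm (clamp01 ((N : ℝ) * τ j - _))]
      exact abs_sum_clamp01_mul_sub_le (mul_nonneg hN (h0 l)) (by gcongr)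
        (mul_le_of_le_one_right hN (h1 j))
  rw [e, Finset.mul_sum, ← Finset.sum_sub_distrib]
  simp_rw [Finset.mul_sum, ← Finset.sum_sub_distrib]
  refine (Finset.abs_sum_le_sum_abs _ _).trans (Finset.sum_le_sum fun j _ => ?_)
  refine (Finset.abs_sum_le_sum_abs _ _).trans (Finset.sum_le_sum fun l _ => ?_)
  rw [← mul_assoc, ← sub_mul, abs_mul]
  exact mul_le_of_le_one_left (abs_nonneg _) (hjl j l)

lemma sum_min_mul_inner {d n : ℕ} (ts : ℕ → ℝ) (hts0 : ts 0 = 0)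
    (hts : ∀ i < n, ts i < ts (i + 1)) (ξ : Fin n → Ed d) :
    ∑ j : Fin n, ∑ l : Fin n, min (ts ((j : ℕ) + 1)) (ts ((l : ℕ) + 1)) * ⟪ξ j, ξ l⟫
      = ∑ i : Fin n, (ts ((i : ℕ) + 1) - ts (i : ℕ)) * ‖∑ j ∈ Finset.Ici i, ξ j‖ ^ 2 := by
  have hmono : ∀ i j, i ≤ j → j ≤ n → ts i ≤ ts j := by
    intro i j hij
    induction j, hij using Nat.le_induction with
    | base => exact fun _ => le_rfl
    | succ j _ ih => exact fun hj => (ih (by omega)).trans (hts j (by omega)).le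
  have htel : ∀ k : Fin n, ∑ i : Fin n,
      (if i ≤ k then ts ((i : ℕ) + 1) - ts (i : ℕ) else 0) = ts ((k : ℕ) + 1) := by
    intro k
    have h := Finset.sum_range_sub ts ((k : ℕ) + 1)
    rw [hts0, sub_zero] at h
    simp_rw [Fin.le_def]
    rw [← h, Fin.sum_univ_eq_sum_range
      (fun i => if i ≤ (k : ℕ) then ts (i + 1) - ts i else 0) n, ← Finset.sum_filter]
    refine Finset.sum_congr ?_ fun _ _ => rfl
    ext i
    simp only [Finset.mem_filter, Finset.mem_range]
    omega
  have hmin : ∀ j l : Fin n, min (ts ((j : ℕ) + 1)) (ts ((l : ℕ) + 1))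
      = ∑ i : Fin n, if i ≤ j ∧ i ≤ l then ts ((i : ℕ) + 1) - ts (i : ℕ) else 0 := by
    intro j l
    simp_rw [← le_min_iff]
    rw [htel]
    rcases le_total j l with h | h
    · rw [min_eq_left h, min_eq_left]
      exact hmono _ _ (by simpa using h) (by omega)
    · rw [min_eq_right h, min_eq_right]
      exact hmono _ _ (by simpa using h) (by omega)
  have hnorm : ∀ i : Fin n, ‖∑ j ∈ Finset.Ici i, ξ j‖ ^ 2
      = ∑ j, ∑ l, if i ≤ j ∧ i ≤ l then ⟪ξ j, ξ l⟫ else 0 := by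
    intro i
    have hI : Finset.Ici i = Finset.univ.filter (fun j => i ≤ j) := by ext; simp
    rw [← real_inner_self_eq_norm_sq, hI, sum_inner, Finset.sum_filter]
    refine Finset.sum_congr rfl fun j _ => ?_
    rw [inner_sum, Finset.sum_filter]
    split_ifs with h <;> simp [h]
  simp_rw [hmin, hnorm, Finset.sum_mul, Finset.mul_sum]
  rw [Finset.sum_comm]
  rw [Finset.sum_congr rfl fun l _ => Finset.sum_comm]
  rw [Finset.sum_comm]
  refine Finset.sum_congr rfl fun i _ => ?_
  rw [Finset.sum_comm]
  refine Finset.sum_congr rfl fun j _ => Finset.sum_congr rfl fun l _ => ?_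
  split_ifs <;> simp

lemma tendsto_prod_stepChar {d n : ℕ} (hd : 1 ≤ d) (τ : Fin n → ℝ) (h0 : ∀ j, 0 ≤ τ j)
    (h1 : ∀ j, τ j ≤ 1) (ξ : Fin n → Ed d) {a : ℕ → ℝ} {N : ℕ → ℕ} {t : ℝ}
    (ha : Tendsto a atTop (𝓝 0)) (hN : Tendsto (fun k => a k ^ 2 * N k / d) atTop (𝓝 t)) :
    Tendsto (fun k => ∏ i, stepChar (a k) (stepFreq (N k) τ ξ i)) atTop
      (𝓝 (Real.exp (-(t / 2) * ∑ j, ∑ l, min (τ j) (τ l) * ⟪ξ j, ξ l⟫))) := by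
  have hd0 : (0 : ℝ) < d := by exact_mod_cast hd
  set Q := ∑ j, ∑ l, min (τ j) (τ l) * ⟪ξ j, ξ l⟫
  set R := ∑ j, ∑ l, |⟪ξ j, ξ l⟫|
  set B := ∑ j, ‖ξ j‖
  have ha2 : Tendsto (fun k => a k ^ 2) atTop (𝓝 0) := by simpa using ha.pow 2
  have hquad : Tendsto (fun k => a k ^ 2 / (2 * d) * ∑ i, ‖stepFreq (N k) τ ξ i‖ ^ 2) atTop
      (𝓝 (t / 2 * Q)) := by
    have hlim : Tendsto (fun k => a k ^ 2 * N k / d / 2 * Q) atTop (𝓝 (t / 2 * Q)) :=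
      (hN.div_const 2).mul_const Q
    refine hlim.congr_dist ?_
    have hz : Tendsto (fun k => a k ^ 2 / (2 * d) * R) atTop (𝓝 0) := by
      simpa using (ha2.div_const (2 * (d : ℝ))).mul_const R
    refine squeeze_zero (fun _ => dist_nonneg) (fun k => ?_) hz
    rw [dist_comm, Real.dist_eq]
    have e : a k ^ 2 / (2 * d) * ∑ i, ‖stepFreq (N k) τ ξ i‖ ^ 2 - a k ^ 2 * N k / d / 2 * Q
        = a k ^ 2 / (2 * d) * (∑ i, ‖stepFreq (N k) τ ξ i‖ ^ 2 - N k * Q) := by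
      field_simp
    rw [e, abs_mul, abs_of_nonneg (by positivity)]
    gcongr
    exact abs_sum_norm_stepFreq_sq_sub_le (N k) τ h0 h1 ξ
  have hexp : Tendsto (fun k => ∏ i, Real.exp (-(a k ^ 2 * ‖stepFreq (N k) τ ξ i‖ ^ 2 / (2 * d))))
      atTop (𝓝 (Real.exp (-(t / 2) * Q))) := by
    have := (Real.continuous_exp.tendsto _).comp hquad.neg
    rw [neg_mul]
    refine this.congr fun k => ?_
    rw [← Real.exp_sum, Function.comp_apply, Finset.sum_neg_distrib, Finset.mul_sum]
    congr 2
    refine Finset.sum_congr rfl fun i _ => ?_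
    ring
  refine hexp.congr_dist ?_
  have hz : Tendsto (fun k => 2 * d * (a k ^ 2 * N k / d) * a k ^ 2 * B ^ 4) atTop (𝓝 0) := by
    simpa using ((hN.const_mul (2 * (d : ℝ))).mul ha2).mul_const (B ^ 4)
  have hsmall : ∀ᶠ k in atTop, |a k| * B ≤ 1 := by
    have : Tendsto (fun k => |a k| * B) atTop (𝓝 0) := by
      simpa using ha.abs.mul_const B
    exact (this.eventually_lt_const zero_lt_one).mono fun k hk => hk.le
  refine squeeze_zero' (Eventually.of_forall fun _ => dist_nonneg) ?_ hz
  filter_upwards [hsmall] with k hk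
  rw [dist_comm, Real.dist_eq]
  refine (abs_prod_sub_prod_le _ _ _ (fun i => abs_stepChar_le_one hd _ _) (fun i => ?_)).trans ?_
  · rw [abs_of_pos (Real.exp_pos _), Real.exp_le_one_iff, neg_nonpos]
    positivity
  · calc _ ≤ ∑ i : Fin (N k), 2 * (a k ^ 4 * B ^ 4) := by
          refine Finset.sum_le_sum fun i _ => ?_
          have hB := norm_stepFreq_le (N k) τ ξ i
          refine (abs_stepChar_sub_exp_le hd ?_).trans ?_
          · exact (mul_le_mul_of_nonneg_left hB (abs_nonneg _)).trans hk
          · have : 0 ≤ a k ^ 4 := by positivity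
            gcongr
      _ = _ := by
          simp
          field_simp

/-- The values of a path at the nonzero multiples of `1/K`. -/
def gridEval {d : ℕ} (x : Ed d) (K : ℕ) (ω : Omega1 x) : PiLp 2 (fun _ : Fin K => Ed d) :=
  WithLp.toLp 2 fun i => evalAt ω.1 ((((i : ℕ) + 1 : ℕ) : ℝ) / K)

lemma continuous_gridEval {d : ℕ} (x : Ed d) (K : ℕ) : Continuous (gridEval x K) := by
  refine (PiLp.continuous_toLp 2 _).comp (continuous_pi fun i => ?_)
  exact (continuous_eval_const _).comp continuous_subtype_val

/-- The piecewise linear path from `x` through the points `y`. -/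
def interpPath {d : ℕ} (x : Ed d) (K : ℕ) (y : PiLp 2 (fun _ : Fin K => Ed d)) : Omega1 x :=
  pwLin1 x K fun i => y i - prevPt x y i

lemma continuous_pwLinE {d : ℕ} (x : Ed d) (K : ℕ) : Continuous (pwLinE x K) := by
  refine ContinuousMap.continuous_of_continuous_uncurry _ ?_
  show Continuous fun p : (Fin K → Ed d) × unitInterval =>
    x + ∑ i : Fin K, clamp01 ((K : ℝ) * (p.2 : ℝ) - ((i : ℕ) : ℝ)) • p.1 i
  have := clamp01_continuous
  fun_prop

lemma continuous_interpPath {d : ℕ} (x : Ed d) (K : ℕ) : Continuous (interpPath x K) := by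
  refine Continuous.subtype_mk ((continuous_pwLinE x K).comp (continuous_pi fun i => ?_)) _
  refine Continuous.sub (by fun_prop) ?_
  unfold prevPt
  split_ifs <;> fun_prop

lemma coe_interpPath_gridEval {d : ℕ} (x : Ed d) (K : ℕ) (ω : Omega1 x) :
    (interpPath x K (gridEval x K ω) : PathSp d) = gridPath K ω.1 := by
  show pwLinE x K _ = pwLinE (ω.1 0) K _
  rw [ω.2]
  congr 1
  funext i
  rw [prevPt]
  split_ifs with h
  · simp [gridEval, h, evalAt_zero, ω.2]
  · have : (i : ℕ) - 1 + 1 = i := by omega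
    simp only [gridEval, this]
    push_cast
    rfl

lemma charFun_map_gridEval {d : ℕ} (x : Ed d) (K : ℕ) (μ : Measure (Omega1 x))
    (ξ : PiLp 2 (fun _ : Fin K => Ed d)) :
    charFun (μ.map (gridEval x K)) ξ = ∫ ω : Omega1 x, Complex.exp (Complex.I *
      ((∑ j : Fin K, ⟪ξ j, evalAt ω.1 ((((j : ℕ) + 1 : ℕ) : ℝ) / K)⟫ : ℝ) : ℂ)) ∂μ := by
  rw [charFun_apply, integral_map (continuous_gridEval x K).aemeasurable]
  · refine integral_congr_ae (ae_of_all _ fun ω => ?_)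
    simp only [PiLp.inner_apply, gridEval, real_inner_comm, mul_comm]
  · exact Continuous.aestronglyMeasurable (by fun_prop)

lemma tendsto_integral_comp_gridEval {d : ℕ} (hd : 1 ≤ d) {x : Ed d}
    {Wt : ℝ → Measure (Omega1 x)} (hWt : IsWienerFamily x Wt) {a : ℕ → ℝ} {N : ℕ → ℕ} {t : ℝ}
    (ht : 0 < t) (ha : Tendsto a atTop (𝓝 0))
    (hN : Tendsto (fun k => a k ^ 2 * N k / d) atTop (𝓝 t)) {K : ℕ} (hK : 0 < K)
    (g : BoundedContinuousFunction (PiLp 2 (fun _ : Fin K => Ed d)) ℝ) :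
    Tendsto (fun k => ∫ ω, g (gridEval x K ω) ∂(VxaN x (a k) (N k))) atTop
      (𝓝 (∫ ω, g (gridEval x K ω) ∂(Wt t))) := by
  obtain ⟨hprob, hW⟩ := hWt t ht
  have hV := fun k => isProbabilityMeasure_VxaN hd x (a k) (N k)
  have hmeas : Measurable (gridEval x K) := (continuous_gridEval x K).measurable
  let P : ℕ → ProbabilityMeasure (PiLp 2 (fun _ : Fin K => Ed d)) := fun k =>
    ⟨(VxaN x (a k) (N k)).map (gridEval x K), Measure.isProbabilityMeasure_map hmeas.aemeasurable⟩
  let P₀ : ProbabilityMeasure (PiLp 2 (fun _ : Fin K => Ed d)) :=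
    ⟨(Wt t).map (gridEval x K), Measure.isProbabilityMeasure_map hmeas.aemeasurable⟩
  have hK0 : (0 : ℝ) < K := by exact_mod_cast hK
  have hP : Tendsto P atTop (𝓝 P₀) := by
    refine ProbabilityMeasure.tendsto_of_tendsto_charFun fun ξ => ?_
    show Tendsto (fun k => charFun ((VxaN x (a k) (N k)).map (gridEval x K)) ξ) atTop
      (𝓝 (charFun ((Wt t).map (gridEval x K)) ξ))
    simp_rw [charFun_map_gridEval]
    have h0 : ∀ j : Fin K, (0 : ℝ) ≤ (((j : ℕ) + 1 : ℕ) : ℝ) / K := fun j => by positivity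
    have h1 : ∀ j : Fin K, (((j : ℕ) + 1 : ℕ) : ℝ) / K ≤ 1 := fun j => by
      rw [div_le_one hK0]
      exact_mod_cast j.2
    have hts : ∀ i < K, ((i : ℕ) : ℝ) / K < ((i + 1 : ℕ) : ℝ) / K := fun i _ => by
      gcongr
      omega
    have hlim := hW K (fun i => (i : ℝ) / K) (by simp) hts (by rw [div_self hK0.ne']) ξ
    rw [hlim, Complex.exp_add]
    simp_rw [integral_exp_VxaN hd x _ _ (fun j : Fin K => (((j : ℕ) + 1 : ℕ) : ℝ) / K) h0 h1]
    refine Tendsto.mul_const _ ?_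
    rw [← Complex.ofReal_exp]
    refine (Complex.continuous_ofReal.tendsto _).comp ?_
    rw [← sum_min_mul_inner (fun i => (i : ℝ) / K) (by simp) hts]
    exact tendsto_prod_stepChar hd _ h0 h1 ξ ha hN
  have h := ProbabilityMeasure.tendsto_iff_forall_integral_tendsto.1 hP g
  have hmap : ∀ μ : Measure (Omega1 x),
      ∫ y, g y ∂(μ.map (gridEval x K)) = ∫ ω, g (gridEval x K ω) ∂μ := fun μ =>
    integral_map hmeas.aemeasurable g.continuous.aestronglyMeasurable
  simpa only [P, P₀, ProbabilityMeasure.coe_mk, hmap] using h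

lemma abs_integral_VxaN_sub_interpPath_le {d : ℕ} (hd : 1 ≤ d) (x : Ed d) (a : ℝ) (N n : ℕ)
    {f : Omega1 x → ℝ} {L : NNReal} (hf : LipschitzWith L f) :
    |∫ ω, f ω ∂(VxaN x a N) - ∫ ω, f (interpPath x (2 ^ n) (gridEval x (2 ^ n) ω)) ∂(VxaN x a N)|
      ≤ L * (10 * (1 + 3 * (a ^ 2 * N) ^ 2) * (9 / 10) ^ n) := by
  have hd0 : (0 : ℝ) < d := by exact_mod_cast hd
  rw [integral_VxaN hd, integral_VxaN hd, ← smul_sub, ← Finset.sum_sub_distrib, smul_eq_mul,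
    abs_mul, abs_of_pos (by positivity), inv_mul_le_iff₀ (by positivity), mul_left_comm]
  refine (Finset.abs_sum_le_sum_abs _ _).trans ?_
  refine le_trans ?_ (mul_le_mul_of_nonneg_left (sum_dist_walk_gridPath_le x a N n) L.2)
  rw [Finset.mul_sum]
  refine Finset.sum_le_sum fun s _ => ?_
  rw [← Real.dist_eq]
  refine (hf.dist_le_mul _ _).trans (le_of_eq ?_)
  rw [Subtype.dist_eq, coe_interpPath_gridEval]
  rfl

lemma tendsto_integral_interpPath {d : ℕ} {x : Ed d} (μ : Measure (Omega1 x))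
    [IsProbabilityMeasure μ] (f : BoundedContinuousFunction (Omega1 x) ℝ) :
    Tendsto (fun n : ℕ => ∫ ω, f (interpPath x (2 ^ n) (gridEval x (2 ^ n) ω)) ∂μ) atTop
      (𝓝 (∫ ω, f ω ∂μ)) := by
  refine tendsto_integral_of_dominated_convergence (fun _ => ‖f‖) (fun n => ?_)
    (integrable_const _) (fun n => ae_of_all _ fun ω => f.norm_coe_le_norm _)
    (ae_of_all _ fun ω => ?_)
  · exact (f.continuous.comp ((continuous_interpPath x _).comp
      (continuous_gridEval x _))).aestronglyMeasurable
  · refine (f.continuous.tendsto _).comp ?_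
    rw [tendsto_subtype_rng]
    simp_rw [coe_interpPath_gridEval]
    exact (tendsto_gridPath ω.1).comp (tendsto_pow_atTop_atTop_of_one_lt one_lt_two)

lemma tendsto_integral_VxaN_of_lipschitz {d : ℕ} (hd : 1 ≤ d) {x : Ed d}
    {Wt : ℝ → Measure (Omega1 x)} (hWt : IsWienerFamily x Wt) {a : ℕ → ℝ} {N : ℕ → ℕ} {t : ℝ}
    (ht : 0 < t) (ha : Tendsto a atTop (𝓝 0))
    (hN : Tendsto (fun k => a k ^ 2 * N k / d) atTop (𝓝 t))
    (f : BoundedContinuousFunction (Omega1 x) ℝ) {L : NNReal} (hf : LipschitzWith L f) :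
    Tendsto (fun k => ∫ ω, f ω ∂(VxaN x (a k) (N k))) atTop (𝓝 (∫ ω, f ω ∂(Wt t))) := by
  have hprob := (hWt t ht).1
  have hd0 : (0 : ℝ) < d := by exact_mod_cast hd
  rw [Metric.tendsto_atTop']
  intro ε hε
  have hbound : ∀ᶠ k in atTop, a k ^ 2 * N k ≤ (t + 1) * d := by
    filter_upwards [hN.eventually_lt_const (lt_add_one t)] with k hk
    exact ((div_lt_iff₀ hd0).1 hk).le
  have hgeom : Tendsto (fun n : ℕ => L * (10 * (1 + 3 * ((t + 1) * d) ^ 2) * (9 / 10 : ℝ) ^ n))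
      atTop (𝓝 0) := by
    simpa using ((tendsto_pow_atTop_nhds_zero_of_lt_one (r := (9 / 10 : ℝ)) (by norm_num)
      (by norm_num)).const_mul (10 * (1 + 3 * ((t + 1) * d) ^ 2))).const_mul (L : ℝ)
  obtain ⟨n, hn1, hn2⟩ := ((hgeom.eventually_lt_const (show (0 : ℝ) < ε / 3 by positivity)).and
    ((Metric.tendsto_nhds.1 (tendsto_integral_interpPath (Wt t) f)) (ε / 3)
      (by positivity))).exists
  have hfd := tendsto_integral_comp_gridEval hd hWt ht ha hN (K := 2 ^ n) (by positivity)
    (f.compContinuous ⟨interpPath x (2 ^ n), continuous_interpPath x _⟩)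
  have hev := (Metric.tendsto_nhds.1 hfd) (ε / 3) (by positivity)
  obtain ⟨k₀, hk₀⟩ := eventually_atTop.1 (hev.and hbound)
  refine ⟨k₀, fun k hk => ?_⟩
  obtain ⟨h1, h2⟩ := hk₀ k hk.le
  have h3 := abs_integral_VxaN_sub_interpPath_le hd x (a k) (N k) n hf
  have h4 : L * (10 * (1 + 3 * (a k ^ 2 * N k) ^ 2) * (9 / 10 : ℝ) ^ n)
      ≤ L * (10 * (1 + 3 * ((t + 1) * d) ^ 2) * (9 / 10 : ℝ) ^ n) := by gcongr
  simp only [BoundedContinuousFunction.compContinuous_apply, ContinuousMap.coe_mk] at h1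
  rw [Real.dist_eq] at *
  rw [abs_lt] at *
  rw [abs_le] at h3
  constructor <;> linarith [h1.1, h1.2, h3.1, h3.2, hn2.1, hn2.2]

/-- Donsker's theorem for lattice walks with `a² N / d → t`. -/
lemma tendsto_integral_VxaN {d : ℕ} (hd : 1 ≤ d) {x : Ed d}
    {Wt : ℝ → Measure (Omega1 x)} (hWt : IsWienerFamily x Wt) {a : ℕ → ℝ} {N : ℕ → ℕ} {t : ℝ}
    (ht : 0 < t) (ha : Tendsto a atTop (𝓝 0))
    (hN : Tendsto (fun k => a k ^ 2 * N k / d) atTop (𝓝 t))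
    (f : BoundedContinuousFunction (Omega1 x) ℝ) :
    Tendsto (fun k => ∫ ω, f ω ∂(VxaN x (a k) (N k))) atTop (𝓝 (∫ ω, f ω ∂(Wt t))) := by
  let P : ℕ → ProbabilityMeasure (Omega1 x) := fun k =>
    ⟨VxaN x (a k) (N k), isProbabilityMeasure_VxaN hd x (a k) (N k)⟩
  let P₀ : ProbabilityMeasure (Omega1 x) := ⟨Wt t, (hWt t ht).1⟩
  have hP : Tendsto P atTop (𝓝 P₀) := by
    rw [tendsto_iff_forall_lipschitz_integral_tendsto]
    rintro g ⟨C, hC⟩ ⟨L, hL⟩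
    exact tendsto_integral_VxaN_of_lipschitz hd hWt ht ha hN
      (BoundedContinuousFunction.mkOfBound ⟨g, hL.continuous⟩ C hC) hL
  exact ProbabilityMeasure.tendsto_iff_forall_integral_tendsto.1 hP f

lemma map_floor_volume_restrict_Ioi :
    (volume.restrict (Ioi (0 : ℝ))).map (Nat.floor : ℝ → ℕ) = Measure.count := by
  refine Measure.ext_of_singleton fun n => ?_
  rw [Measure.count_singleton, Measure.map_apply Nat.measurable_floor (measurableSet_singleton n),
    Measure.restrict_congr_set Ioi_ae_eq_Ici,
    Measure.restrict_apply (Nat.measurable_floor (measurableSet_singleton n))]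
  have h : (Nat.floor ⁻¹' {n} ∩ Ici (0 : ℝ)) = Ico (n : ℝ) (n + 1) := by
    ext s
    simp only [mem_inter_iff, mem_preimage, mem_singleton_iff, mem_Ici, mem_Ico]
    constructor
    · rintro ⟨hs, h0⟩
      exact (Nat.floor_eq_iff h0).1 hs
    · intro hs
      have h0 : 0 ≤ s := (Nat.cast_nonneg n).trans hs.1
      exact ⟨(Nat.floor_eq_iff h0).2 hs, h0⟩
  rw [h, Real.volume_Ico]
  simp

lemma integral_Ioi_comp_floor_mul {b : ℝ} (hb : 0 < b) {h : ℕ → ℝ} (hh : Summable h) :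
    ∫ t in Ioi (0 : ℝ), h ⌊b * t⌋₊ = b⁻¹ * ∑' n, h n := by
  rw [integral_comp_mul_left_Ioi (fun s => h ⌊s⌋₊) 0 hb, mul_zero, smul_eq_mul,
    ← integral_map (φ := (Nat.floor : ℝ → ℕ)) (f := h) Nat.measurable_floor.aemeasurable
      (measurable_from_top.aestronglyMeasurable), map_floor_volume_restrict_Ioi,
    integral_countable (integrable_count_iff.2 hh.norm)]
  simp [Measure.real]

lemma abs_integral_VxaN_le {d : ℕ} (hd : 1 ≤ d) {x : Ed d} (a : ℝ) (N : ℕ)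
    (f : BoundedContinuousFunction (Omega1 x) ℝ) : |∫ ω, f ω ∂(VxaN x a N)| ≤ ‖f‖ := by
  have := isProbabilityMeasure_VxaN hd x a N
  simpa using f.norm_integral_le_norm (VxaN x a N)

lemma integral_Vxa {d : ℕ} (hd : 1 ≤ d) {x : Ed d} {m a : ℝ} (hm : 0 < m) (ha : 0 < a)
    (f : BoundedContinuousFunction (Omega1 x) ℝ) :
    ∫ ω, f ω ∂(Vxa x m a) = ((1 - Real.exp (-m ^ 2 * a ^ 2 / (2 * d))) * (d / a ^ 2)) *
      ∫ t in Ioi (0 : ℝ), Real.exp (-m ^ 2 * a ^ 2 * ⌊d / a ^ 2 * t⌋₊ / (2 * d)) *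
        ∫ ω, f ω ∂(VxaN x a ⌊d / a ^ 2 * t⌋₊) := by
  have hd0 : (0 : ℝ) < d := by exact_mod_cast hd
  have hprob := isProbabilityMeasure_VxaN hd x a
  have hneg : -m ^ 2 * a ^ 2 / (2 * d) < 0 := by
    have : 0 < m ^ 2 * a ^ 2 / (2 * d) := by positivity
    rw [neg_mul, neg_div]
    linarith
  have hexp : Summable fun N : ℕ => Real.exp (-m ^ 2 * a ^ 2 * N / (2 * d)) := by
    refine (Real.summable_exp_nat_mul_iff.2 hneg).congr fun N => ?_
    congr 1
    ring
  have hsum : Summable fun N : ℕ => Real.exp (-m ^ 2 * a ^ 2 * N / (2 * d)) *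
      ∫ ω, f ω ∂(VxaN x a N) := by
    refine Summable.of_norm_bounded (hexp.mul_right ‖f‖) fun N => ?_
    rw [norm_mul, Real.norm_of_nonneg (Real.exp_pos _).le, Real.norm_eq_abs]
    gcongr
    exact abs_integral_VxaN_le hd a N f
  have hfin : IsFiniteMeasure (Measure.sum fun N : ℕ =>
      ENNReal.ofReal (Real.exp (-m ^ 2 * a ^ 2 * N / (2 * d))) • VxaN x a N) := by
    constructor
    rw [Measure.sum_apply _ MeasurableSet.univ]
    simp only [Measure.smul_apply, measure_univ, smul_eq_mul, mul_one]
    exact hexp.tsum_ofReal_lt_top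
  rw [integral_Ioi_comp_floor_mul (b := d / a ^ 2) (h := fun N : ℕ =>
      Real.exp (-m ^ 2 * a ^ 2 * N / (2 * d)) * ∫ ω, f ω ∂(VxaN x a N)) (by positivity) hsum,
    Vxa, integral_smul_measure, integral_sum_measure (f.integrable _), ← mul_assoc,
    mul_inv_cancel_right₀ (by positivity), ENNReal.toReal_ofReal, smul_eq_mul]
  · simp_rw [integral_smul_measure, ENNReal.toReal_ofReal (Real.exp_pos _).le, smul_eq_mul]
  · rw [sub_nonneg, Real.exp_le_one_iff]
    exact hneg.le

lemma tendsto_one_sub_exp_mul_div_sq {d : ℕ} (hd : 1 ≤ d) {m : ℝ} (hm : 0 < m) :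
    Tendsto (fun a : ℝ => (1 - Real.exp (-m ^ 2 * a ^ 2 / (2 * d))) * (d / a ^ 2)) (𝓝[>] 0)
      (𝓝 (m ^ 2 / 2)) := by
  have hd0 : (0 : ℝ) < d := by exact_mod_cast hd
  have hslope := hasDerivAt_iff_tendsto_slope_zero.1 (Real.hasDerivAt_exp 0)
  have hc : Tendsto (fun a : ℝ => -m ^ 2 * a ^ 2 / (2 * d)) (𝓝[>] 0) (𝓝[≠] 0) := by
    refine tendsto_nhdsWithin_iff.2 ⟨?_, ?_⟩
    · have : Continuous fun a : ℝ => -m ^ 2 * a ^ 2 / (2 * d) := by fun_prop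
      simpa using (this.tendsto 0).mono_left nhdsWithin_le_nhds
    · filter_upwards [self_mem_nhdsWithin] with a ha
      have ha' : (0 : ℝ) < a := ha
      have : 0 < m ^ 2 * a ^ 2 / (2 * d) := by positivity
      rw [neg_mul, neg_div]
      exact (neg_neg_of_pos this).ne
  have h := (hslope.comp hc).const_mul (m ^ 2 / 2)
  rw [Real.exp_zero, mul_one] at h
  refine h.congr' ?_
  filter_upwards [self_mem_nhdsWithin] with a ha
  have ha' : (0 : ℝ) < a := ha
  simp only [Function.comp_apply, zero_add, smul_eq_mul]
  field_simp
  ring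

lemma tendsto_sq_mul_floor_div {d : ℕ} (hd : 1 ≤ d) {t : ℝ} (ht : 0 < t) :
    Tendsto (fun a : ℝ => a ^ 2 * ⌊d / a ^ 2 * t⌋₊ / d) (𝓝[>] 0) (𝓝 t) := by
  have hd0 : (0 : ℝ) < d := by exact_mod_cast hd
  have hinv : Tendsto (fun a : ℝ => (d : ℝ) / a ^ 2) (𝓝[>] 0) atTop := by
    have h := ((tendsto_pow_atTop two_ne_zero).comp
      (tendsto_inv_nhdsGT_zero (𝕜 := ℝ))).const_mul_atTop hd0
    refine h.congr fun a => ?_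
    rw [Function.comp_apply, inv_pow, div_eq_mul_inv]
  refine ((tendsto_nat_floor_mul_div_atTop ht.le).comp hinv).congr fun a => ?_
  rw [Function.comp_apply, div_div_eq_mul_div, mul_comm t, mul_comm (a ^ 2)]

/-- **Theorem 3.2 (strong form)**: `V'_{x,a} → (m²/2) V'_x` weakly as `a → 0⁺`,
where `V'_x(A) = ∫_0^∞ e^{-m²t/2} W_x^t(A) dt`. -/
theorem Vxa_tendsto_weakly (d : ℕ) (hd : 1 ≤ d) (m : ℝ) (hm : 0 < m) (x : Ed d)
    (Wt : ℝ → Measure (Omega1 x)) (hWt : IsWienerFamily x Wt) :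
    ∀ f : BoundedContinuousFunction (Omega1 x) ℝ,
      Tendsto (fun a : ℝ => ∫ ω, f ω ∂(Vxa x m a)) (nhdsWithin 0 (Set.Ioi 0))
        (nhds ((m ^ 2 / 2) *
          ∫ t in Set.Ioi (0 : ℝ), Real.exp (-m ^ 2 * t / 2) * ∫ ω, f ω ∂(Wt t))) := by
  intro f
  have hd0 : (0 : ℝ) < d := by exact_mod_cast hd
  have hlim : Tendsto (fun a : ℝ =>
      ∫ t in Ioi (0 : ℝ), Real.exp (-m ^ 2 * a ^ 2 * ⌊d / a ^ 2 * t⌋₊ / (2 * d)) *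
        ∫ ω, f ω ∂(VxaN x a ⌊d / a ^ 2 * t⌋₊)) (𝓝[>] 0)
      (𝓝 (∫ t in Ioi (0 : ℝ), Real.exp (-m ^ 2 * t / 2) * ∫ ω, f ω ∂(Wt t))) := by
    refine tendsto_integral_filter_of_dominated_convergence
      (fun t => Real.exp (m ^ 2) * ‖f‖ * Real.exp (-(m ^ 2 / 2) * t)) ?_ ?_ ?_ ?_
    · refine Eventually.of_forall fun a => Measurable.aestronglyMeasurable ?_
      have hmul : Measurable fun t : ℝ => (d : ℝ) / a ^ 2 * t := measurable_const_mul _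
      exact (measurable_from_top (f := fun N : ℕ => Real.exp (-m ^ 2 * a ^ 2 * N / (2 * d)) *
        ∫ ω, f ω ∂(VxaN x a N))).comp (Nat.measurable_floor.comp hmul)
    · filter_upwards [Ioo_mem_nhdsGT (zero_lt_one (α := ℝ))] with a ha
      refine ae_of_all _ fun t => ?_
      have ha0 : 0 < a := ha.1
      rw [norm_mul, Real.norm_of_nonneg (Real.exp_pos _).le, Real.norm_eq_abs,
        mul_right_comm (Real.exp (m ^ 2)), ← Real.exp_add]
      refine mul_le_mul (Real.exp_le_exp.2 ?_) (abs_integral_VxaN_le hd a _ f) (abs_nonneg _)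
        (Real.exp_pos _).le
      have hfl := (Nat.lt_floor_add_one ((d : ℝ) / a ^ 2 * t)).le
      have hd1 : (1 : ℝ) ≤ d := by exact_mod_cast hd
      have ha1 : a ^ 2 ≤ 1 := pow_le_one₀ ha0.le ha.2.le
      have hc : m ^ 2 * a ^ 2 / (2 * d) ≤ m ^ 2 := by
        rw [div_le_iff₀ (by positivity)]
        nlinarith [sq_nonneg m]
      have hmul := mul_le_mul_of_nonneg_left hfl
        (show 0 ≤ m ^ 2 * a ^ 2 / (2 * d) by positivity)
      have e1 : m ^ 2 * a ^ 2 / (2 * d) * (d / a ^ 2 * t) = m ^ 2 / 2 * t := by field_simp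
      have e2 : -m ^ 2 * a ^ 2 * ⌊(d : ℝ) / a ^ 2 * t⌋₊ / (2 * d)
          = -(m ^ 2 * a ^ 2 / (2 * d) * ⌊(d : ℝ) / a ^ 2 * t⌋₊) := by ring
      rw [e2]
      linarith
    · exact (exp_neg_integrableOn_Ioi 0 (by positivity)).const_mul _
    · refine (ae_restrict_iff' measurableSet_Ioi).2 (ae_of_all _ fun t ht => ?_)
      have hfloor := tendsto_sq_mul_floor_div hd (mem_Ioi.1 ht)
      refine Tendsto.mul ?_ ?_
      · refine (Real.continuous_exp.tendsto _).comp ?_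
        have := hfloor.const_mul (-m ^ 2 / 2)
        rw [← mul_div_right_comm] at this
        refine this.congr fun a => ?_
        ring
      · refine tendsto_of_seq_tendsto fun u hu => ?_
        exact tendsto_integral_VxaN hd hWt (mem_Ioi.1 ht) (hu.mono_right nhdsWithin_le_nhds)
          (hfloor.comp hu) f
  refine ((tendsto_one_sub_exp_mul_div_sq hd hm).mul hlim).congr' ?_
  filter_upwards [self_mem_nhdsWithin] with a ha
  exact (integral_Vxa hd hm ha f).symm

end
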